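/- For the group G = (ℤ/3ℤ) × (ℤ/21ℤ) of order 63, there exists a (G, 8; 1)-difference matrix; that is, an 8 × 63 matrix D with entries in G such that for any two distinct rows i ≠ j, the 63 differences (D i k)⁻¹ · (D j k) are pairwise distinct. In particular there exist 7 mutually orthogonal Latin squares of order 63 arising from a difference matrix. -/

import Mathlib

/-- A Latin square of order `n`: every row map and every column map is a bijection. -/
def IsLatinSquare {n : ℕ} (L : Fin n → Fin n → Fin n) : Prop :=
  (∀ i, Function.Bijective fun j => L i j) ∧ (∀ j, Function.Bijective fun i => L i j)

/-- Two squares are orthogonal if the superposition map is injective. -/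
def IsOrthogonal {n : ℕ} (L₁ L₂ : Fin n → Fin n → Fin n) : Prop :=
  Function.Injective fun p : Fin n × Fin n => (L₁ p.1 p.2, L₂ p.1 p.2)

/-- The table of the difference matrix; the element `(x, z)` of `ℤ/3 × ℤ/21` is encoded as
`21 * x + z`. -/
def dmTable : List (List ℕ) :=
  [[0, 7, 14, 46, 53, 60, 38, 24, 31, 0, 7, 14, 0, 7, 14, 2, 9, 16, 19, 5, 12, 45, 52, 59,
    39, 25, 32, 0, 7, 14, 0, 7, 14, 1, 8, 15, 20, 6, 13, 48, 55, 62, 36, 22, 29, 0, 7, 14,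
    0, 7, 14, 56, 42, 49, 28, 35, 21, 51, 58, 44, 33, 40, 26],
   [0, 14, 7, 45, 59, 52, 39, 32, 25, 60, 53, 46, 24, 38, 31, 7, 0, 14, 14, 7, 0, 26, 40,
    33, 58, 51, 44, 23, 37, 30, 61, 54, 47, 44, 58, 51, 40, 33, 26, 17, 10, 3, 4, 18, 11,
    35, 28, 21, 49, 42, 56, 46, 60, 53, 38, 31, 24, 36, 29, 22, 48, 62, 55],
   [0, 21, 42, 14, 35, 56, 7, 28, 49, 10, 31, 52, 11, 32, 53, 34, 55, 13, 50, 8, 29, 61, 19,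
    40, 23, 44, 2, 42, 0, 21, 21, 42, 0, 42, 0, 21, 21, 42, 0, 42, 0, 21, 21, 42, 0, 50, 8,
    29, 34, 55, 13, 23, 44, 2, 61, 19, 40, 11, 32, 53, 10, 31, 52],
   [0, 28, 56, 29, 57, 1, 55, 20, 27, 48, 13, 41, 36, 43, 8, 0, 28, 56, 0, 28, 56, 53, 18,
    25, 31, 59, 3, 54, 19, 26, 30, 58, 2, 0, 28, 56, 0, 28, 56, 37, 44, 9, 47, 12, 40, 60,
    4, 32, 24, 52, 17, 0, 28, 56, 0, 28, 56, 35, 42, 7, 49, 14, 21],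
   [0, 35, 49, 40, 54, 5, 44, 16, 30, 49, 0, 35, 35, 49, 0, 62, 13, 27, 22, 57, 8, 51, 2,
    37, 33, 47, 19, 8, 22, 57, 13, 27, 62, 26, 61, 12, 58, 9, 23, 50, 1, 36, 34, 48, 20, 37,
    51, 2, 47, 19, 33, 39, 53, 4, 45, 17, 31, 56, 7, 21, 28, 42, 14],
   [0, 42, 21, 7, 49, 28, 14, 56, 35, 42, 21, 0, 21, 0, 42, 42, 21, 0, 21, 0, 42, 42, 21, 0,
    21, 0, 42, 45, 24, 3, 39, 18, 60, 48, 27, 6, 36, 15, 57, 54, 33, 12, 30, 9, 51, 55, 34,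
    13, 29, 8, 50, 19, 61, 40, 2, 44, 23, 31, 10, 52, 53, 32, 11],
   [0, 49, 35, 51, 37, 2, 33, 19, 47, 29, 15, 43, 55, 41, 6, 54, 40, 5, 30, 16, 44, 0, 49,
    35, 0, 49, 35, 46, 32, 18, 38, 3, 52, 45, 31, 17, 39, 4, 53, 0, 49, 35, 0, 49, 35, 14,
    42, 28, 7, 56, 21, 57, 22, 8, 27, 13, 62, 0, 49, 35, 0, 49, 35],
   [0, 56, 28, 41, 13, 48, 43, 36, 8, 17, 52, 24, 4, 60, 32, 57, 29, 1, 27, 20, 55, 28, 0,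
    56, 56, 28, 0, 62, 34, 6, 22, 15, 50, 11, 46, 39, 10, 45, 38, 32, 4, 60, 52, 24, 17, 30,
    2, 58, 54, 26, 19, 14, 49, 21, 7, 42, 35, 1, 57, 29, 20, 55, 27]]

/-- Entry `(x, z)` of `ℤ/3 × ℤ/21` is encoded as the natural number `21 * x + z`. -/
def dmEntry (i k : ℕ) : ℕ := (dmTable.getD i []).getD k 0

/-- The encoded difference of two encoded elements. -/
def dmDiff (a b : ℕ) : ℕ :=
  21 * ((b / 21 % 3 + 3 - a / 21 % 3) % 3) + (b % 21 + 21 - a % 21) % 21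

/-- All differences of rows `i` and `j` are distinct. -/
def dmCheck (i j : ℕ) : Bool :=
  decide (List.Nodup ((List.range 63).map fun k => dmDiff (dmEntry i k) (dmEntry j k)))

theorem dmCheck_all : ∀ i < 8, ∀ j < 8, i ≠ j → dmCheck i j = true := by
  decide +kernel

/-- The difference matrix. -/
def dmMat (i : Fin 8) (k : Fin 63) : Multiplicative (ZMod 3 × ZMod 21) :=
  Multiplicative.ofAdd (((dmEntry i k / 21 : ℕ) : ZMod 3), ((dmEntry i k % 21 : ℕ) : ZMod 21))

theorem dmDiff_eq_of (a b c d : ℕ)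
    (h3 : (-((a / 21 : ℕ) : ZMod 3) + ((b / 21 : ℕ) : ZMod 3))
      = (-((c / 21 : ℕ) : ZMod 3) + ((d / 21 : ℕ) : ZMod 3)))
    (h21 : (-((a % 21 : ℕ) : ZMod 21) + ((b % 21 : ℕ) : ZMod 21))
      = (-((c % 21 : ℕ) : ZMod 21) + ((d % 21 : ℕ) : ZMod 21))) :
    dmDiff a b = dmDiff c d := by
  have e3 : ((b / 21 + c / 21 : ℕ) : ZMod 3) = ((d / 21 + a / 21 : ℕ) : ZMod 3) := by
    push_cast
    linear_combination h3
  have e21 : ((b % 21 + c % 21 : ℕ) : ZMod 21) = ((d % 21 + a % 21 : ℕ) : ZMod 21) := by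
    push_cast
    linear_combination h21
  rw [ZMod.natCast_eq_natCast_iff'] at e3 e21
  unfold dmDiff
  have hx : (b / 21 % 3 + 3 - a / 21 % 3) % 3 = (d / 21 % 3 + 3 - c / 21 % 3) % 3 := by omega
  have hz : (b % 21 + 21 - a % 21) % 21 = (d % 21 + 21 - c % 21) % 21 := by omega
  rw [hx, hz]

theorem dmMat_inj (i j : Fin 8) (hij : i ≠ j) :
    Function.Injective fun k : Fin 63 => (dmMat i k)⁻¹ * dmMat j k := by
  intro k k' h
  have hc := dmCheck_all i i.2 j j.2 (fun h => hij (Fin.ext h))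
  have hnd := of_decide_eq_true hc
  have h' := congrArg Multiplicative.toAdd h
  simp only [dmMat, toAdd_mul, toAdd_inv, toAdd_ofAdd] at h'
  have h1 := congrArg Prod.fst h'
  have h2 := congrArg Prod.snd h'
  simp only [Prod.fst_add, Prod.fst_neg, Prod.snd_add, Prod.snd_neg] at h1 h2
  have hd := dmDiff_eq_of _ _ _ _ h1 h2
  have := List.inj_on_of_nodup_map hnd (List.mem_range.2 k.2) (List.mem_range.2 k'.2) hd
  exact Fin.ext this

/-- A difference matrix yields mutually orthogonal Latin squares. -/
theorem mols_of_dm {G : Type} [Group G] [Fintype G] {n m : ℕ} (hcard : Fintype.card G = n)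
    (D : Fin (m + 1) → Fin n → G)
    (hD : ∀ i j, i ≠ j → Function.Injective fun k => (D i k)⁻¹ * D j k) :
    ∃ L : Fin m → (Fin n → Fin n → Fin n),
      (∀ k, IsLatinSquare (L k)) ∧ (∀ k k', k ≠ k' → IsOrthogonal (L k) (L k')) := by
  classical
  let e : G ≃ Fin n := Fintype.equivFinOfCardEq hcard
  refine ⟨fun k r c => e (e.symm r * ((D 0 c)⁻¹ * D k.succ c)), ?_, ?_⟩
  · intro k
    constructor
    · intro r
      apply Finite.injective_iff_bijective.1
      intro c c' h
      have h1 := mul_left_cancel (e.injective h)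
      exact hD 0 k.succ (Fin.succ_ne_zero k).symm h1
    · intro c
      apply Finite.injective_iff_bijective.1
      intro r r' h
      exact e.symm.injective (mul_right_cancel (e.injective h))
  · rintro k k' hk ⟨r, c⟩ ⟨r', c'⟩ h
    simp only [Prod.mk.injEq, EmbeddingLike.apply_eq_iff_eq] at h
    obtain ⟨h1, h2⟩ := h
    have hc : c = c' := by
      apply hD k.succ k'.succ (fun h => hk (Fin.succ_injective _ h))
      have key : ∀ (g : G) (x : Fin n), (D k.succ x)⁻¹ * D k'.succ x
          = (g * ((D 0 x)⁻¹ * D k.succ x))⁻¹ * (g * ((D 0 x)⁻¹ * D k'.succ x)) := by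
        intro g x
        group
      show (D k.succ c)⁻¹ * D k'.succ c = (D k.succ c')⁻¹ * D k'.succ c'
      rw [key (e.symm r) c, key (e.symm r') c', h1, h2]
    subst hc
    have hr : r = r' := e.symm.injective (mul_right_cancel h1)
    rw [hr]

/-- For the group `G = ℤ/3 × ℤ/21` of order `63` there exists a `(G, 8; 1)`-difference
matrix (an `8 × 63` matrix over `G` in which, for any two distinct rows, the `63`
columnwise differences are pairwise distinct); in particular there exist `7`
mutually orthogonal Latin squares of order `63`. -/
theorem diffMatrix_Z3xZ21_and_7MOLS_63 :
    (∃ D : Fin 8 → Fin 63 → Multiplicative (ZMod 3 × ZMod 21),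
      ∀ i j : Fin 8, i ≠ j →
        Function.Injective fun k : Fin 63 => (D i k)⁻¹ * D j k) ∧
    (∃ L : Fin 7 → (Fin 63 → Fin 63 → Fin 63),
      (∀ k, IsLatinSquare (L k)) ∧
      (∀ k k', k ≠ k' → IsOrthogonal (L k) (L k'))) := by
  refine ⟨⟨dmMat, dmMat_inj⟩, ?_⟩
  have hcard : Fintype.card (Multiplicative (ZMod 3 × ZMod 21)) = 63 := by
    simp [Fintype.card_multiplicative, Fintype.card_prod, ZMod.card]
  exact mols_of_dm hcard dmMat dmMat_inj
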